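/- arXiv:0909.2057 — 7 statements merged into one kernel-verified Lean document; each statement's English description precedes it below -/
import Mathlib

section
/- For φ ∈ [0, π], define p_s(φ) = (1 + 2·sin(φ/2) + 2^{3/2}·sin((π−φ)/4)·√(sin(φ/2)))^{−2}, and for nonzero x, y ∈ ℂ let A(x,y) = [[x, (e^{iφ}−1)·x/y], [y/x, 1/x]] ∈ ℂ^{2×2}. Then the supremum over all nonzero x, y ∈ ℂ of σ_max(A(x,y))^{−4}, where σ_max denotes the largest singular value (equivalently the ℓ²→ℓ² operator norm), equals p_s(φ). -/
open Complex Matrix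

/-- The largest singular value of a square complex matrix, i.e. its `ℓ² → ℓ²` operator norm. -/
noncomputable def sigmaMax (A : Matrix (Fin 2) (Fin 2) ℂ) : ℝ :=
  ‖Matrix.toEuclideanCLM (𝕜 := ℂ) (n := Fin 2) A‖

/-- The core matrix of the post-selected controlled phase gate. -/
noncomputable def coreMatrix (φ : ℝ) (x y : ℂ) : Matrix (Fin 2) (Fin 2) ℂ :=
  !![x, (Complex.exp (φ * Complex.I) - 1) * x / y;
     y / x, 1 / x]

/-- The optimal success probability of the post-selected controlled phase gate. -/
noncomputable def pSucc (φ : ℝ) : ℝ :=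
  (1 + 2 * Real.sin (φ / 2) +
    2 ^ ((3 : ℝ) / 2) * Real.sin ((Real.pi - φ) / 4) * Real.sqrt (Real.sin (φ / 2))) ^ (-2 : ℤ)

/-!
The square of the largest singular value `σ` of a `2 × 2` matrix `A` is the top eigenvalue of the
Gram matrix `Aᴴ * A`, i.e. the larger root of `X ^ 2 - T * X + ‖A.det‖ ^ 2`, where `T` is the
squared Frobenius norm of `A`. For the core matrices, with entries `x`, `c * x / y`, `y / x` and
`1 / x`, the determinant is `1 - c` whatever `x` and `y` are, so minimising `σ` amounts to
minimising `T`. By AM-GM the infimum of `T` is `2 * (1 + ‖c‖)`; it is not attained when `c = 0`, so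
the supremum of `σ ^ (-4)` is identified by continuity. At `c = exp (φ * I) - 1` one has
`‖c‖ = 2 * |sin (φ / 2)|` and `c.re = -‖c‖ ^ 2 / 2`.
-/

/-- The larger root of the quadratic polynomial `X ^ 2 - t * X + d`. When the discriminant is
negative this is the junk value `t / 2`. -/
noncomputable def largerRoot (t d : ℝ) : ℝ :=
  t / 2 + √((t / 2) ^ 2 - d)

lemma largerRoot_pos {t : ℝ} (ht : 0 < t) (d : ℝ) : 0 < largerRoot t d := by
  unfold largerRoot
  positivity

lemma largerRoot_le_largerRoot {t t' : ℝ} (ht : 0 ≤ t) (h : t ≤ t') (d : ℝ) :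
    largerRoot t d ≤ largerRoot t' d := by
  unfold largerRoot
  gcongr

lemma continuous_largerRoot (d : ℝ) : Continuous (largerRoot · d) := by
  unfold largerRoot
  fun_prop

lemma eq_largerRoot {t d r : ℝ} (hroot : r ^ 2 - t * r + d = 0) (hr : t / 2 ≤ r) :
    r = largerRoot t d := by
  have hdisc : (t / 2) ^ 2 - d = (r - t / 2) ^ 2 := by linear_combination -hroot
  rw [largerRoot, hdisc, Real.sqrt_sq (sub_nonneg.2 hr), add_sub_cancel]

lemma antitoneOn_largerRoot_zpow_neg_two (d : ℝ) :
    AntitoneOn (fun t ↦ largerRoot t d ^ (-2 : ℤ)) (Set.Ioi 0) := by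
  intro t (ht : 0 < t) t' _ htt'
  simp only [_root_.zpow_neg]
  have hpos := largerRoot_pos ht d
  exact inv_anti₀ (by positivity)
    (zpow_le_zpow_left₀ zero_le_two hpos.le (largerRoot_le_largerRoot ht.le htt' d))

lemma continuousAt_largerRoot_zpow_neg_two (d : ℝ) {t : ℝ} (ht : 0 < t) :
    ContinuousAt (fun t ↦ largerRoot t d ^ (-2 : ℤ)) t :=
  (continuous_largerRoot d).continuousAt.zpow₀ _ (.inl (largerRoot_pos ht d).ne')

section L2OpNorm

open scoped Matrix.Norms.L2Operator MatrixOrder ComplexOrder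

variable {𝕜 m n : Type*} [RCLike 𝕜] [Fintype m] [Fintype n]

lemma re_trace_conjTranspose_mul_self (A : Matrix m n 𝕜) :
    RCLike.re (Aᴴ * A).trace = ∑ i, ∑ j, ‖A i j‖ ^ 2 := by
  rw [Finset.sum_comm]
  simp [trace, mul_apply, RCLike.conj_mul, -map_pow, ← RCLike.ofReal_pow]

variable [DecidableEq n]

lemma norm_apply_le_l2_opNorm (A : Matrix m n 𝕜) (i : m) (j : n) : ‖A i j‖ ≤ ‖A‖ := by
  have hcol := (PiLp.norm_apply_le _ i).trans (l2_opNorm_mulVec A (EuclideanSpace.single j 1))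
  simpa using hcol

lemma norm_trace_le_card_mul_l2_opNorm (A : Matrix n n 𝕜) :
    ‖A.trace‖ ≤ Fintype.card n * ‖A‖ := by
  calc ‖A.trace‖ ≤ ∑ i, ‖A i i‖ := norm_sum_le _ _
    _ ≤ ∑ _i : n, ‖A‖ := Finset.sum_le_sum fun i _ ↦ norm_apply_le_l2_opNorm A i i
    _ = Fintype.card n * ‖A‖ := by simp

lemma isRoot_charpoly_l2_opNorm_of_posSemidef [Nonempty n] {G : Matrix n n ℂ}
    (hG : G.PosSemidef) : G.charpoly.IsRoot (‖G‖ : ℂ) := by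
  rw [← mem_spectrum_iff_isRoot_charpoly]
  exact spectrum.algebraMap_mem ℂ (CStarAlgebra.norm_mem_spectrum_of_nonneg hG.nonneg)

lemma l2_opNorm_eq_largerRoot_of_posSemidef {G : Matrix (Fin 2) (Fin 2) ℂ} (hG : G.PosSemidef) :
    ‖G‖ = largerRoot G.trace.re G.det.re := by
  have hroot : ‖G‖ ^ 2 - G.trace.re * ‖G‖ + G.det.re = 0 := by
    have h := isRoot_charpoly_l2_opNorm_of_posSemidef hG
    rw [Polynomial.IsRoot, charpoly_fin_two] at h
    simpa [← Complex.ofReal_pow] using congrArg Complex.re h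
  have hlarger : G.trace.re / 2 ≤ ‖G‖ := by
    have h := (Complex.re_le_norm _).trans (norm_trace_le_card_mul_l2_opNorm G)
    rw [Fintype.card_fin] at h
    push_cast at h
    linarith
  exact eq_largerRoot hroot hlarger

lemma sigmaMax_sq_eq_largerRoot (A : Matrix (Fin 2) (Fin 2) ℂ) :
    sigmaMax A ^ 2 = largerRoot (∑ i, ∑ j, ‖A i j‖ ^ 2) (‖A.det‖ ^ 2) := by
  have hdet : (Aᴴ * A).det.re = ‖A.det‖ ^ 2 := by
    rw [det_mul, det_conjTranspose, Complex.star_def, Complex.conj_mul', ← Complex.ofReal_pow,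
      Complex.ofReal_re]
  have htrace : (Aᴴ * A).trace.re = ∑ i, ∑ j, ‖A i j‖ ^ 2 := re_trace_conjTranspose_mul_self A
  rw [← hdet, ← htrace,
    ← l2_opNorm_eq_largerRoot_of_posSemidef (posSemidef_conjTranspose_mul_self A),
    l2_opNorm_conjTranspose_mul_self, ← sq, sigmaMax, l2_opNorm_toEuclideanCLM]

end L2OpNorm

/-- The core matrix with an arbitrary complex number `c` in place of `exp (φ * I) - 1`, so that
`coreMatrix φ` is `weightedCore (exp (φ * I) - 1)` by definition. -/
noncomputable def weightedCore (c x y : ℂ) : Matrix (Fin 2) (Fin 2) ℂ :=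
  !![x, c * x / y; y / x, 1 / x]

lemma det_weightedCore (c : ℂ) {x y : ℂ} (hx : x ≠ 0) (hy : y ≠ 0) :
    (weightedCore c x y).det = 1 - c := by
  rw [weightedCore, det_fin_two_of]
  field_simp

lemma sum_norm_sq_weightedCore (c x y : ℂ) :
    ∑ i, ∑ j, ‖weightedCore c x y i j‖ ^ 2 =
      ‖x‖ ^ 2 + (‖c‖ * ‖x‖ / ‖y‖) ^ 2 + ((‖y‖ / ‖x‖) ^ 2 + (1 / ‖x‖) ^ 2) := by
  simp [weightedCore]

lemma two_mul_one_add_norm_le_sum_norm_sq_weightedCore (c : ℂ) {x y : ℂ} (hx : x ≠ 0)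
    (hy : y ≠ 0) : 2 * (1 + ‖c‖) ≤ ∑ i, ∑ j, ‖weightedCore c x y i j‖ ^ 2 := by
  have hx' : ‖x‖ ≠ 0 := norm_ne_zero_iff.2 hx
  have hy' : ‖y‖ ≠ 0 := norm_ne_zero_iff.2 hy
  have hdiag : 2 ≤ ‖x‖ ^ 2 + (1 / ‖x‖) ^ 2 := by
    calc 2 = 2 * ‖x‖ * (1 / ‖x‖) := by field_simp
      _ ≤ _ := two_mul_le_add_sq _ _
  have hoffDiag : 2 * ‖c‖ ≤ (‖c‖ * ‖x‖ / ‖y‖) ^ 2 + (‖y‖ / ‖x‖) ^ 2 := by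
    calc 2 * ‖c‖ = 2 * (‖c‖ * ‖x‖ / ‖y‖) * (‖y‖ / ‖x‖) := by field_simp
      _ ≤ _ := two_mul_le_add_sq _ _
  rw [sum_norm_sq_weightedCore]
  linarith

lemma sum_norm_sq_weightedCore_one_sqrt_le (c : ℂ) {δ : ℝ} (hδ : 0 < δ) :
    ∑ i, ∑ j, ‖weightedCore c 1 (√(‖c‖ + δ) : ℝ) i j‖ ^ 2 ≤ 2 * (1 + ‖c‖) + δ := by
  have hfrac : ‖c‖ ^ 2 / (‖c‖ + δ) ≤ ‖c‖ := by
    rw [div_le_iff₀ (by positivity), sq]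
    gcongr
    linarith
  rw [sum_norm_sq_weightedCore, Complex.norm_of_nonneg (Real.sqrt_nonneg _), norm_one, mul_one,
    div_one, div_one, div_pow, Real.sq_sqrt (by positivity)]
  linarith

lemma isGLB_sum_norm_sq_weightedCore (c : ℂ) :
    IsGLB {T : ℝ | ∃ x y : ℂ, x ≠ 0 ∧ y ≠ 0 ∧ T = ∑ i, ∑ j, ‖weightedCore c x y i j‖ ^ 2}
      (2 * (1 + ‖c‖)) := by
  constructor
  · rintro _ ⟨x, y, hx, hy, rfl⟩
    exact two_mul_one_add_norm_le_sum_norm_sq_weightedCore c hx hy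
  · intro b hb
    refine le_of_forall_pos_le_add fun δ hδ ↦ ?_
    have hy : ((√(‖c‖ + δ) : ℝ) : ℂ) ≠ 0 := Complex.ofReal_ne_zero.2 (by positivity)
    exact (hb ⟨1, _, one_ne_zero, hy, rfl⟩).trans (sum_norm_sq_weightedCore_one_sqrt_le c hδ)

lemma sigmaMax_weightedCore_zpow_neg_four (c : ℂ) {x y : ℂ} (hx : x ≠ 0) (hy : y ≠ 0) :
    sigmaMax (weightedCore c x y) ^ (-4 : ℤ) =
      largerRoot (∑ i, ∑ j, ‖weightedCore c x y i j‖ ^ 2) (‖1 - c‖ ^ 2) ^ (-2 : ℤ) := by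
  rw [← det_weightedCore c hx hy, ← sigmaMax_sq_eq_largerRoot, ← zpow_natCast, ← _root_.zpow_mul]
  norm_num

lemma largerRoot_two_mul_one_add_norm (c : ℂ) :
    largerRoot (2 * (1 + ‖c‖)) (‖1 - c‖ ^ 2) = 1 + ‖c‖ + √(2 * (‖c‖ + c.re)) := by
  have hnorm : ‖1 - c‖ ^ 2 = 1 - 2 * c.re + ‖c‖ ^ 2 := by simpa using norm_sub_sq (𝕜 := ℂ) 1 c
  rw [largerRoot, mul_div_cancel_left₀ _ two_ne_zero, hnorm]
  ring_nf

theorem stmt_2_general (c : ℂ) :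
    IsLUB {r : ℝ | ∃ x y : ℂ, x ≠ 0 ∧ y ≠ 0 ∧ r = sigmaMax (weightedCore c x y) ^ (-4 : ℤ)}
      ((1 + ‖c‖ + √(2 * (‖c‖ + c.re))) ^ (-2 : ℤ)) := by
  have hvalues : {r : ℝ | ∃ x y : ℂ, x ≠ 0 ∧ y ≠ 0 ∧ r = sigmaMax (weightedCore c x y) ^ (-4 : ℤ)} =
      (fun T ↦ largerRoot T (‖1 - c‖ ^ 2) ^ (-2 : ℤ)) ''
        {T : ℝ | ∃ x y : ℂ, x ≠ 0 ∧ y ≠ 0 ∧ T = ∑ i, ∑ j, ‖weightedCore c x y i j‖ ^ 2} := by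
    ext r
    constructor
    · rintro ⟨x, y, hx, hy, rfl⟩
      exact ⟨_, ⟨x, y, hx, hy, rfl⟩, (sigmaMax_weightedCore_zpow_neg_four c hx hy).symm⟩
    · rintro ⟨_, ⟨x, y, hx, hy, rfl⟩, rfl⟩
      exact ⟨x, y, hx, hy, (sigmaMax_weightedCore_zpow_neg_four c hx hy).symm⟩
  have hglb := isGLB_sum_norm_sq_weightedCore c
  have hpos : 0 < 2 * (1 + ‖c‖) := by positivity
  have hanti := (antitoneOn_largerRoot_zpow_neg_two (‖1 - c‖ ^ 2)).mono
    fun T hT ↦ hpos.trans_le (hglb.1 hT)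
  have hcont := continuousAt_largerRoot_zpow_neg_two (‖1 - c‖ ^ 2) hpos
  rw [hvalues, ← largerRoot_two_mul_one_add_norm]
  exact hglb.isLUB_of_tendsto hanti ⟨_, 1, 1, one_ne_zero, one_ne_zero, rfl⟩
    hcont.continuousWithinAt

lemma norm_exp_mul_I_sub_one (φ : ℝ) :
    ‖Complex.exp (φ * Complex.I) - 1‖ = 2 * |Real.sin (φ / 2)| := by
  rw [mul_comm, Complex.norm_exp_I_mul_ofReal_sub_one, norm_mul, Real.norm_ofNat, Real.norm_eq_abs]

lemma re_exp_mul_I_sub_one (φ : ℝ) :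
    (Complex.exp (φ * Complex.I) - 1).re = -2 * Real.sin (φ / 2) ^ 2 := by
  rw [Complex.sub_re, Complex.exp_ofReal_mul_I_re, Complex.one_re, Real.sin_sq_eq_half_sub,
    mul_div_cancel₀ φ two_ne_zero]
  ring

lemma sin_pi_sub_div_four_sq (φ : ℝ) :
    Real.sin ((Real.pi - φ) / 4) ^ 2 = (1 - Real.sin (φ / 2)) / 2 := by
  rw [Real.sin_sq_eq_half_sub, ← Real.cos_pi_div_two_sub (φ / 2)]
  ring_nf

lemma pSucc_eq_of_mem_Icc {φ : ℝ} (hφ : φ ∈ Set.Icc 0 Real.pi) :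
    pSucc φ = (1 + ‖Complex.exp (φ * Complex.I) - 1‖ +
      √(2 * (‖Complex.exp (φ * Complex.I) - 1‖ + (Complex.exp (φ * Complex.I) - 1).re))) ^
        (-2 : ℤ) := by
  obtain ⟨h0, hpi⟩ := hφ
  have hs : 0 ≤ Real.sin (φ / 2) := Real.sin_nonneg_of_nonneg_of_le_pi (by linarith) (by linarith)
  have ht : 0 ≤ Real.sin ((Real.pi - φ) / 4) :=
    Real.sin_nonneg_of_nonneg_of_le_pi (by linarith) (by linarith)
  have hpow : ((2 : ℝ) ^ ((3 : ℝ) / 2)) ^ 2 = 8 := by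
    rw [← Real.rpow_mul_natCast zero_le_two]
    norm_num
  have hradicand : 2 * (2 * Real.sin (φ / 2) + -2 * Real.sin (φ / 2) ^ 2) =
      (2 ^ ((3 : ℝ) / 2) * Real.sin ((Real.pi - φ) / 4) * √(Real.sin (φ / 2))) ^ 2 := by
    rw [mul_pow, mul_pow, hpow, sin_pi_sub_div_four_sq, Real.sq_sqrt hs]
    ring
  rw [norm_exp_mul_I_sub_one, re_exp_mul_I_sub_one, abs_of_nonneg hs, hradicand,
    Real.sqrt_sq (by positivity), pSucc]

theorem stmt_2 (φ : ℝ) (hφ : φ ∈ Set.Icc 0 Real.pi) :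
    sSup {r : ℝ | ∃ x y : ℂ, x ≠ 0 ∧ y ≠ 0 ∧ r = (sigmaMax (coreMatrix φ x y)) ^ (-4 : ℤ)} =
      pSucc φ := by
  rw [pSucc_eq_of_mem_Icc hφ]
  exact (stmt_2_general _).csSup_eq ⟨_, 1, 1, one_ne_zero, one_ne_zero, rfl⟩
end

section
/- Let φ ∈ [0, π]. For nonzero x, y ∈ ℂ and z₁, z₂ ∈ ℂ, define the extended row vectors A'₁ = (x, (e^{iφ}−1)·x/y, z₁) and A'₂ = (y/x, 1/x, z₂) in ℂ³. Then the infimum of ‖A'₁‖²·‖A'₂‖² over all nonzero x, y ∈ ℂ and all z₁, z₂ ∈ ℂ subject to the orthogonality constraint ⟨A'₁, A'₂⟩ = x·conj(y/x) + ((e^{iφ}−1)·x/y)·conj(1/x) + z₁·conj(z₂) = 0 equals (1 + 2·sin(φ/2) + 2^{3/2}·sin((π−φ)/4)·√(sin(φ/2)))². Consequently the optimal success probability p_s(φ) = sup (‖A'₁‖²·‖A'₂‖²)^{−1} over the same constraint set equals (1 + 2·sin(φ/2) + 2^{3/2}·sin((π−φ)/4)·√(sin(φ/2)))^{−2}. 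-/
open Complex Matrix

/-- First extended row of the core matrix, as a vector in Euclidean space `ℂ³`. -/
noncomputable def row1 (φ : ℝ) (x y z₁ : ℂ) : EuclideanSpace ℂ (Fin 3) :=
  (WithLp.equiv 2 (Fin 3 → ℂ)).symm ![x, (Complex.exp (φ * Complex.I) - 1) * x / y, z₁]

/-- Second extended row of the core matrix, as a vector in Euclidean space `ℂ³`. -/
noncomputable def row2 (x y z₂ : ℂ) : EuclideanSpace ℂ (Fin 3) :=
  (WithLp.equiv 2 (Fin 3 → ℂ)).symm ![y / x, 1 / x, z₂]

/-- The orthogonality constraint `⟨A'₁, A'₂⟩ = 0` written out explicitly. -/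
noncomputable def orthoConstraint (φ : ℝ) (x y z₁ z₂ : ℂ) : Prop :=
  x * (starRingEnd ℂ) (y / x) +
    ((Complex.exp (φ * Complex.I) - 1) * x / y) * (starRingEnd ℂ) (1 / x) +
    z₁ * (starRingEnd ℂ) z₂ = 0

/-!
For fixed core rows `a` and `b`, the extending entries only have to satisfy `|z₁ z₂| = |⟨a, b⟩|`,
and by Cauchy–Schwarz the best choice gives `(‖a‖ ‖b‖ + |⟨a, b⟩|)²`. Put `W = |e^{iφ} - 1|` and
`T = |y|² + W² / |y|²`. As `e^{iφ}` has modulus one, `‖a‖² ‖b‖² = 1 + W² + T` and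
`|⟨a, b⟩|² = T - W²`. Both increase with `T`, whose infimum is `2 W` by AM-GM, which leaves
`(1 + W + √(2 W - W²))²` with `W = 2 |sin (φ / 2)|`.
-/

open scoped ComplexConjugate

theorem isLUB_image_inv_of_isGLB {S : Set ℝ} {a : ℝ} (h : IsGLB S a) (hS : S.Nonempty)
    (ha : 0 < a) : IsLUB ((·⁻¹) '' S) a⁻¹ := by
  have hanti : AntitoneOn (·⁻¹) S := fun s hs _ _ hst ↦ inv_anti₀ (ha.trans_le (h.1 hs)) hst
  exact h.isLUB_of_tendsto hanti hS ((continuousAt_inv₀ ha.ne').mono_left inf_le_left)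

theorem isGLB_add_sq_div {W : ℝ} (hW : 0 ≤ W) :
    IsGLB ((fun s ↦ s + W ^ 2 / s) '' Set.Ioi 0) (2 * W) := by
  refine ⟨?_, fun b hb ↦ ?_⟩
  · rintro _ ⟨s, hs : 0 < s, rfl⟩
    have hgap : s + W ^ 2 / s - 2 * W = (s - W) ^ 2 / s := by
      field_simp
      ring
    have : 0 ≤ (s - W) ^ 2 / s := by positivity
    linarith
  · rcases hW.eq_or_lt with rfl | hW_pos
    · -- For `W = 0` the infimum is not attained, but only approached as `s → 0`.
      refine le_of_forall_gt_imp_ge_of_dense fun s hs ↦ ?_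
      simpa using hb ⟨s, by simpa using hs, rfl⟩
    · refine (hb ⟨W, hW_pos, rfl⟩).trans_eq ?_
      field_simp
      ring

theorem one_sub_sin_eq_two_mul_sin_sq (θ : ℝ) :
    1 - Real.sin θ = 2 * Real.sin ((Real.pi / 2 - θ) / 2) ^ 2 := by
  rw [Real.sin_sq_eq_half_sub, mul_div_cancel₀ _ two_ne_zero, Real.cos_pi_div_two_sub]
  ring

theorem two_rpow_mul_sin_mul_sqrt_sin {φ : ℝ} (hφ : φ ∈ Set.Icc 0 Real.pi) :
    2 ^ ((3 : ℝ) / 2) * Real.sin ((Real.pi - φ) / 4) * √(Real.sin (φ / 2)) =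
      2 * √(Real.sin (φ / 2) * (1 - Real.sin (φ / 2))) := by
  obtain ⟨hφ₀, hφ_pi⟩ := hφ
  have hsin : 0 ≤ Real.sin (φ / 2) := Real.sin_nonneg_of_nonneg_of_le_pi (by linarith) (by linarith)
  have hsin' : 0 ≤ Real.sin ((Real.pi - φ) / 4) :=
    Real.sin_nonneg_of_nonneg_of_le_pi (by linarith) (by linarith)
  have hrpow : (2 : ℝ) ^ ((3 : ℝ) / 2) = 2 * √2 := by
    rw [show (3 : ℝ) / 2 = 1 + 1 / 2 by norm_num, Real.rpow_add two_pos, Real.rpow_one,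
      Real.sqrt_eq_rpow]
  rw [one_sub_sin_eq_two_mul_sin_sq, show (Real.pi / 2 - φ / 2) / 2 = (Real.pi - φ) / 4 by ring,
    Real.sqrt_mul hsin, Real.sqrt_mul zero_le_two, Real.sqrt_sq hsin', hrpow]
  ring

section OrthogonalExtension

variable {𝕜 E : Type*} [RCLike 𝕜] [SeminormedAddCommGroup E] [InnerProductSpace 𝕜 E]

variable (𝕜) in
/-- The products of squared norms of `(a, z₁)` and `(b, z₂)` over all scalars `z₁`, `z₂` making
these two extensions orthogonal. Mathlib's inner product is conjugate-linear in its first argument,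
so that `⟨a, b⟩` of the physical convention is `inner 𝕜 b a`. -/
def extensionNormProducts (a b : E) : Set ℝ :=
  {r | ∃ z₁ z₂ : 𝕜, inner 𝕜 b a + z₁ * conj z₂ = 0 ∧
    r = (‖a‖ ^ 2 + ‖z₁‖ ^ 2) * (‖b‖ ^ 2 + ‖z₂‖ ^ 2)}

theorem sq_norm_mul_norm_add_norm_inner_mem_extensionNormProducts (a b : E) :
    (‖a‖ * ‖b‖ + ‖inner 𝕜 b a‖) ^ 2 ∈ extensionNormProducts 𝕜 a b := by
  set c := inner 𝕜 b a with hc_def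
  rcases eq_or_ne c 0 with hc | hc
  · exact ⟨0, 0, by simp [← hc_def, hc], by simp [hc, mul_pow]⟩
  have hc_pos : 0 < ‖c‖ := norm_pos_iff.2 hc
  have hab : 0 < ‖b‖ * ‖a‖ := hc_pos.trans_le (norm_inner_le_norm b a)
  have ha : 0 < ‖a‖ := pos_of_mul_pos_right hab (norm_nonneg b)
  have hb : 0 < ‖b‖ := pos_of_mul_pos_left hab (norm_nonneg a)
  -- The equality case of Cauchy–Schwarz: `‖z₁‖ / ‖z₂‖ = ‖a‖ / ‖b‖` together with `‖z₁ z₂‖ = ‖c‖`.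
  set t := √(‖c‖ * ‖b‖ / ‖a‖)
  have ht : 0 < t := Real.sqrt_pos.2 (by positivity)
  have ht_sq : t ^ 2 = ‖c‖ * ‖b‖ / ‖a‖ := Real.sq_sqrt (by positivity)
  have ht_ne : (t : 𝕜) ≠ 0 := RCLike.ofReal_ne_zero.2 ht.ne'
  refine ⟨-c / t, t, ?_, ?_⟩
  · rw [RCLike.conj_ofReal, div_mul_cancel₀ _ ht_ne, add_neg_cancel]
  · rw [norm_div, norm_neg, RCLike.norm_ofReal, div_pow, sq_abs, ht_sq]
    field_simp

theorem isLeast_extensionNormProducts (a b : E) :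
    IsLeast (extensionNormProducts 𝕜 a b) ((‖a‖ * ‖b‖ + ‖inner 𝕜 b a‖) ^ 2) := by
  refine ⟨sq_norm_mul_norm_add_norm_inner_mem_extensionNormProducts a b, ?_⟩
  rintro _ ⟨z₁, z₂, hz, rfl⟩
  rw [eq_neg_of_add_eq_zero_left hz, norm_neg, norm_mul, RCLike.norm_conj]
  linarith [sq_nonneg (‖a‖ * ‖z₂‖ - ‖b‖ * ‖z₁‖)]

end OrthogonalExtension

section CoreRows

/-- First row of the core matrix of the phase gate, with `w` standing for `e^{iφ} - 1`. -/
noncomputable def coreRow₁ (w x y : ℂ) : EuclideanSpace ℂ (Fin 2) := !₂[x, w * x / y]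

/-- Second row of the core matrix of the phase gate. -/
noncomputable def coreRow₂ (x y : ℂ) : EuclideanSpace ℂ (Fin 2) := !₂[y / x, 1 / x]

variable {w x y : ℂ}

theorem inner_coreRow₂_coreRow₁ :
    inner ℂ (coreRow₂ x y) (coreRow₁ w x y) = x * conj (y / x) + w * x / y * conj (1 / x) := by
  simp [coreRow₁, coreRow₂, PiLp.inner_apply, Fin.sum_univ_two]

theorem sq_norm_coreRow₁_mul_sq_norm_coreRow₂ (hx : x ≠ 0) (hy : y ≠ 0) :
    ‖coreRow₁ w x y‖ ^ 2 * ‖coreRow₂ x y‖ ^ 2 =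
      1 + ‖w‖ ^ 2 + (‖y‖ ^ 2 + ‖w‖ ^ 2 / ‖y‖ ^ 2) := by
  have hx' : ‖x‖ ≠ 0 := norm_ne_zero_iff.2 hx
  have hy' : ‖y‖ ≠ 0 := norm_ne_zero_iff.2 hy
  simp only [coreRow₁, coreRow₂, EuclideanSpace.norm_sq_eq, Fin.sum_univ_two, Matrix.cons_val_zero,
    Matrix.cons_val_one, norm_div, norm_mul, norm_one]
  field_simp
  ring

theorem sq_norm_ofReal_add_of_norm_add_one (hw : ‖w + 1‖ = 1) (s : ℝ) :
    ‖(s : ℂ) + w‖ ^ 2 = s ^ 2 - s * ‖w‖ ^ 2 + ‖w‖ ^ 2 := by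
  have hw_sq : ‖w + 1‖ ^ 2 = 1 := by rw [hw, one_pow]
  simp only [Complex.sq_norm, normSq_apply, add_re, add_im, ofReal_re, ofReal_im, one_re, one_im]
    at hw_sq ⊢
  linear_combination s * hw_sq

theorem sq_norm_inner_coreRow₂_coreRow₁ (hw : ‖w + 1‖ = 1) (hx : x ≠ 0) (hy : y ≠ 0) :
    ‖inner ℂ (coreRow₂ x y) (coreRow₁ w x y)‖ ^ 2 =
      ‖y‖ ^ 2 + ‖w‖ ^ 2 / ‖y‖ ^ 2 - ‖w‖ ^ 2 := by
  have hx' : ‖x‖ ≠ 0 := norm_ne_zero_iff.2 hx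
  have hy' : ‖y‖ ≠ 0 := norm_ne_zero_iff.2 hy
  have hxc : conj x ≠ 0 := (map_ne_zero _).2 hx
  have hfactor : inner ℂ (coreRow₂ x y) (coreRow₁ w x y) =
      x / (conj x * y) * ((‖y‖ ^ 2 : ℝ) + w) := by
    rw [inner_coreRow₂_coreRow₁, map_div₀, map_div₀, map_one, ofReal_pow, ← mul_conj' y]
    field_simp
  rw [hfactor, norm_mul, mul_pow, sq_norm_ofReal_add_of_norm_add_one hw, norm_div, norm_mul,
    RCLike.norm_conj]
  field_simp
  ring

/-- The least product of squared norms of the extended rows, for given `W = |e^{iφ} - 1|` and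
`T = |y|² + W² / |y|²`. -/
noncomputable def minNormProduct (W T : ℝ) : ℝ := (√(1 + W ^ 2 + T) + √(T - W ^ 2)) ^ 2

theorem sq_norm_mul_norm_add_norm_inner_coreRow (hw : ‖w + 1‖ = 1) (hx : x ≠ 0) (hy : y ≠ 0) :
    (‖coreRow₁ w x y‖ * ‖coreRow₂ x y‖ + ‖inner ℂ (coreRow₂ x y) (coreRow₁ w x y)‖) ^ 2 =
      minNormProduct ‖w‖ (‖y‖ ^ 2 + ‖w‖ ^ 2 / ‖y‖ ^ 2) := by
  rw [minNormProduct, ← sq_norm_coreRow₁_mul_sq_norm_coreRow₂ hx hy, ← mul_pow,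
    ← sq_norm_inner_coreRow₂_coreRow₁ hw hx hy, Real.sqrt_sq (by positivity),
    Real.sqrt_sq (norm_nonneg _)]

theorem range_sq_norm_mul_norm_add_norm_inner_coreRow (hw : ‖w + 1‖ = 1) :
    Set.range (fun p : ℂˣ × ℂˣ ↦ (‖coreRow₁ w p.1 p.2‖ * ‖coreRow₂ p.1 p.2‖ +
        ‖inner ℂ (coreRow₂ p.1 p.2) (coreRow₁ w p.1 p.2)‖) ^ 2) =
      minNormProduct ‖w‖ '' ((fun s ↦ s + ‖w‖ ^ 2 / s) '' Set.Ioi 0) := by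
  simp only [sq_norm_mul_norm_add_norm_inner_coreRow hw (Units.ne_zero _) (Units.ne_zero _)]
  rw [Set.image_image]
  ext r
  constructor
  · rintro ⟨⟨x, y⟩, rfl⟩
    exact ⟨‖(y : ℂ)‖ ^ 2, pow_pos (norm_pos_iff.2 y.ne_zero) 2, rfl⟩
  · rintro ⟨s, hs : 0 < s, rfl⟩
    refine ⟨⟨1, Units.mk0 (√s : ℂ) (by simpa using (Real.sqrt_pos.2 hs).ne')⟩, ?_⟩
    simp [Real.sq_sqrt hs.le]

end CoreRows

section Minimization

theorem monotone_minNormProduct (W : ℝ) : Monotone (minNormProduct W) := fun _ _ _ ↦ by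
  unfold minNormProduct
  gcongr

theorem continuous_minNormProduct (W : ℝ) : Continuous (minNormProduct W) := by
  unfold minNormProduct
  fun_prop

theorem minNormProduct_two_mul {W : ℝ} (hW : 0 ≤ W) :
    minNormProduct W (2 * W) = (1 + W + √(W * (2 - W))) ^ 2 := by
  rw [minNormProduct, show 1 + W ^ 2 + 2 * W = (1 + W) ^ 2 by ring, Real.sqrt_sq (by positivity),
    show 2 * W - W ^ 2 = W * (2 - W) by ring]

theorem isGLB_image_minNormProduct {W : ℝ} (hW : 0 ≤ W) :
    IsGLB (minNormProduct W '' ((fun s ↦ s + W ^ 2 / s) '' Set.Ioi 0))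
      ((1 + W + √(W * (2 - W))) ^ 2) := by
  rw [← minNormProduct_two_mul hW]
  exact (isGLB_add_sq_div hW).isGLB_of_tendsto ((monotone_minNormProduct W).monotoneOn _)
    (Set.nonempty_Ioi.image _) ((continuous_minNormProduct W).tendsto _ |>.mono_left inf_le_left)

end Minimization

section PhaseGate

/-- The values of `‖A'₁‖² ‖A'₂‖²`, the inverse of the success probability, over all orthogonal
extensions of the core matrices with phase `φ`. -/
def normProducts (φ : ℝ) : Set ℝ :=
  {r | ∃ x y z₁ z₂ : ℂ, x ≠ 0 ∧ y ≠ 0 ∧ orthoConstraint φ x y z₁ z₂ ∧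
    r = ‖row1 φ x y z₁‖ ^ 2 * ‖row2 x y z₂‖ ^ 2}

variable (φ : ℝ)

theorem sq_norm_row1 (x y z : ℂ) :
    ‖row1 φ x y z‖ ^ 2 = ‖coreRow₁ (exp (φ * I) - 1) x y‖ ^ 2 + ‖z‖ ^ 2 := by
  simp [row1, coreRow₁, EuclideanSpace.norm_sq_eq, Fin.sum_univ_three]

theorem sq_norm_row2 (x y z : ℂ) : ‖row2 x y z‖ ^ 2 = ‖coreRow₂ x y‖ ^ 2 + ‖z‖ ^ 2 := by
  simp [row2, coreRow₂, EuclideanSpace.norm_sq_eq, Fin.sum_univ_three]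

theorem normProducts_eq_iUnion :
    normProducts φ = ⋃ p : ℂˣ × ℂˣ, extensionNormProducts ℂ
      (coreRow₁ (exp (φ * I) - 1) p.1 p.2) (coreRow₂ p.1 p.2) := by
  ext r
  simp only [normProducts, extensionNormProducts, orthoConstraint, sq_norm_row1, sq_norm_row2,
    inner_coreRow₂_coreRow₁, Set.mem_iUnion, Set.mem_ofPred_eq]
  constructor
  · rintro ⟨x, y, z₁, z₂, hx, hy, h⟩
    exact ⟨(Units.mk0 x hx, Units.mk0 y hy), z₁, z₂, h⟩
  · rintro ⟨⟨x, y⟩, z₁, z₂, h⟩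
    exact ⟨x, y, z₁, z₂, x.ne_zero, y.ne_zero, h⟩

theorem norm_exp_ofReal_mul_I_sub_one : ‖exp (φ * I) - 1‖ = 2 * |Real.sin (φ / 2)| := by
  rw [mul_comm, norm_exp_I_mul_ofReal_sub_one, norm_mul, Real.norm_two, Real.norm_eq_abs]

theorem isGLB_normProducts :
    IsGLB (normProducts φ)
      ((1 + 2 * |Real.sin (φ / 2)| +
        2 * √(|Real.sin (φ / 2)| * (1 - |Real.sin (φ / 2)|))) ^ 2) := by
  have hw : ‖exp (φ * I) - 1 + 1‖ = 1 := by rw [sub_add_cancel, norm_exp_ofReal_mul_I]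
  have hsqrt (s : ℝ) : √(2 * s * (2 - 2 * s)) = 2 * √(s * (1 - s)) := by
    rw [show 2 * s * (2 - 2 * s) = 2 ^ 2 * (s * (1 - s)) by ring, Real.sqrt_mul (by positivity),
      Real.sqrt_sq zero_le_two]
  have hleast (p : ℂˣ × ℂˣ) := isLeast_extensionNormProducts (𝕜 := ℂ)
    (coreRow₁ (exp (φ * I) - 1) p.1 p.2) (coreRow₂ p.1 p.2)
  rw [normProducts_eq_iUnion, ← isGLB_iUnion_iff_of_isGLB fun p ↦ (hleast p).isGLB,
    range_sq_norm_mul_norm_add_norm_inner_coreRow hw, ← hsqrt, ← norm_exp_ofReal_mul_I_sub_one]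
  exact isGLB_image_minNormProduct (norm_nonneg _)

theorem setOf_inv_eq_image_inv_normProducts :
    {r : ℝ | ∃ x y z₁ z₂ : ℂ, x ≠ 0 ∧ y ≠ 0 ∧ orthoConstraint φ x y z₁ z₂ ∧
      r = (‖row1 φ x y z₁‖ ^ 2 * ‖row2 x y z₂‖ ^ 2)⁻¹} = (·⁻¹) '' normProducts φ := by
  ext r
  constructor
  · rintro ⟨x, y, z₁, z₂, hx, hy, h, rfl⟩
    exact ⟨_, ⟨x, y, z₁, z₂, hx, hy, h, rfl⟩, rfl⟩
  · rintro ⟨_, ⟨x, y, z₁, z₂, hx, hy, h, rfl⟩, rfl⟩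
    exact ⟨x, y, z₁, z₂, hx, hy, h, rfl⟩

end PhaseGate

theorem stmt_3_general (φ : ℝ) :
    sInf {r : ℝ | ∃ x y z₁ z₂ : ℂ, x ≠ 0 ∧ y ≠ 0 ∧ orthoConstraint φ x y z₁ z₂ ∧
        r = ‖row1 φ x y z₁‖ ^ 2 * ‖row2 x y z₂‖ ^ 2} =
      (1 + 2 * |Real.sin (φ / 2)| +
        2 * √(|Real.sin (φ / 2)| * (1 - |Real.sin (φ / 2)|))) ^ 2 ∧
    sSup {r : ℝ | ∃ x y z₁ z₂ : ℂ, x ≠ 0 ∧ y ≠ 0 ∧ orthoConstraint φ x y z₁ z₂ ∧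
        r = (‖row1 φ x y z₁‖ ^ 2 * ‖row2 x y z₂‖ ^ 2)⁻¹} =
      (1 + 2 * |Real.sin (φ / 2)| +
        2 * √(|Real.sin (φ / 2)| * (1 - |Real.sin (φ / 2)|))) ^ (-2 : ℤ) := by
  have hglb := isGLB_normProducts φ
  have hne : (normProducts φ).Nonempty := hglb.nonempty
  have hlub := isLUB_image_inv_of_isGLB hglb hne (by positivity)
  rw [setOf_inv_eq_image_inv_normProducts, _root_.zpow_neg]
  exact ⟨hglb.csInf_eq hne, hlub.csSup_eq (hne.image _)⟩

theorem stmt_3 (φ : ℝ) (hφ : φ ∈ Set.Icc 0 Real.pi) :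
    sInf {r : ℝ | ∃ x y z₁ z₂ : ℂ, x ≠ 0 ∧ y ≠ 0 ∧ orthoConstraint φ x y z₁ z₂ ∧
        r = ‖row1 φ x y z₁‖ ^ 2 * ‖row2 x y z₂‖ ^ 2} =
      (1 + 2 * Real.sin (φ / 2) +
        2 ^ ((3 : ℝ) / 2) * Real.sin ((Real.pi - φ) / 4) * Real.sqrt (Real.sin (φ / 2))) ^ 2 ∧
    sSup {r : ℝ | ∃ x y z₁ z₂ : ℂ, x ≠ 0 ∧ y ≠ 0 ∧ orthoConstraint φ x y z₁ z₂ ∧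
        r = (‖row1 φ x y z₁‖ ^ 2 * ‖row2 x y z₂‖ ^ 2)⁻¹} =
      (1 + 2 * Real.sin (φ / 2) +
        2 ^ ((3 : ℝ) / 2) * Real.sin ((Real.pi - φ) / 4) * Real.sqrt (Real.sin (φ / 2))) ^ (-2 : ℤ) := by
  have hsin : 0 ≤ Real.sin (φ / 2) :=
    Real.sin_nonneg_of_nonneg_of_le_pi (by linarith [hφ.1]) (by linarith [hφ.1, hφ.2])
  simpa only [two_rpow_mul_sin_mul_sqrt_sin hφ, abs_of_nonneg hsin] using stmt_3_general φ
end

section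
/- For φ ∈ [0, π], define p_s(φ) = (1 + 2·sin(φ/2) + 2^{3/2}·sin((π−φ)/4)·√(sin(φ/2)))^{−2}. Then p_s(π/3) = 1/9 = p_s(π), and for every φ with π/3 < φ < π one has p_s(φ) < 1/9. In particular, p_s is not monotone on [0, π]: there exist phases φ < π whose optimal success probability is strictly smaller than that of the π-phase gate. -/
/-! Put `x = √2 * sin ((π - φ) / 4)` and `y = √(sin (φ / 2))`. Since `sin (φ / 2) = 1 - x ^ 2`, the
base of the power defining `pSucc φ` is `3 + 2 * x * (y - x)`. It equals `3` when `x = 0` (at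
`φ = π`) or `x = y` (at `φ = π / 3`), and exceeds `3` when `0 < x < y`. -/

open Real

theorem two_rpow_three_div_two : (2 : ℝ) ^ ((3 : ℝ) / 2) = 2 * √2 := by
  rw [show (3 : ℝ) / 2 = 1 + 1 / 2 by norm_num, rpow_add two_pos, rpow_one, ← sqrt_eq_rpow]

theorem sq_sqrt_two_mul_sin_pi_sub_div_four (φ : ℝ) :
    (√2 * sin ((π - φ) / 4)) ^ 2 = 1 - sin (φ / 2) := by
  rw [mul_pow, sq_sqrt zero_le_two, sin_sq_eq_half_sub, ← cos_pi_div_two_sub (φ / 2)]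
  ring_nf

theorem pSucc_eq_inv_sq (φ : ℝ) :
    pSucc φ = ((3 + 2 * (√2 * sin ((π - φ) / 4)) *
      (√(sin (φ / 2)) - √2 * sin ((π - φ) / 4))) ^ 2)⁻¹ := by
  rw [pSucc, two_rpow_three_div_two, zpow_neg, zpow_ofNat]
  congr 2
  linear_combination 2 * sq_sqrt_two_mul_sin_pi_sub_div_four φ

theorem sqrt_two_mul_sin_lt_sqrt_sin_half {φ : ℝ} (h : 1 / 2 < sin (φ / 2)) :
    √2 * sin ((π - φ) / 4) < √(sin (φ / 2)) := by
  apply lt_sqrt_of_sq_lt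
  linarith [sq_sqrt_two_mul_sin_pi_sub_div_four φ]

theorem pSucc_pi : pSucc π = 1 / 9 := by
  rw [pSucc_eq_inv_sq, sub_self, zero_div, sin_zero]
  norm_num

theorem pSucc_pi_div_three : pSucc (π / 3) = 1 / 9 := by
  have hsin_half : sin (π / 3 / 2) = 1 / 2 := by
    rw [← sin_pi_div_six]
    ring_nf
  have hsin_nonneg : 0 ≤ sin ((π - π / 3) / 4) :=
    sin_nonneg_of_nonneg_of_le_pi (by linarith [pi_pos]) (by linarith [pi_pos])
  have hsqrt : √(sin (π / 3 / 2)) = √2 * sin ((π - π / 3) / 4) := by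
    rw [sqrt_eq_iff_eq_sq (by norm_num [hsin_half]) (by positivity),
      sq_sqrt_two_mul_sin_pi_sub_div_four, hsin_half]
    norm_num
  rw [pSucc_eq_inv_sq, hsqrt, sub_self]
  norm_num

theorem pSucc_lt_one_div_nine {φ : ℝ} (h₁ : π / 3 < φ) (h₂ : φ < π) : pSucc φ < 1 / 9 := by
  have hsin_half : 1 / 2 < sin (φ / 2) := by
    rw [← sin_pi_div_six]
    exact sin_lt_sin_of_lt_of_le_pi_div_two (by linarith) (by linarith) (by linarith)
  have hsin_pos : 0 < sin ((π - φ) / 4) :=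
    sin_pos_of_pos_of_lt_pi (by linarith) (by linarith)
  have hexcess : 0 < 2 * (√2 * sin ((π - φ) / 4)) *
      (√(sin (φ / 2)) - √2 * sin ((π - φ) / 4)) :=
    mul_pos (by positivity) (sub_pos.mpr (sqrt_two_mul_sin_lt_sqrt_sin_half hsin_half))
  calc
    pSucc φ = ((3 + 2 * (√2 * sin ((π - φ) / 4)) *
        (√(sin (φ / 2)) - √2 * sin ((π - φ) / 4))) ^ 2)⁻¹ := pSucc_eq_inv_sq φ
    _ < (3 ^ 2)⁻¹ := by
      gcongr
      exact lt_add_of_pos_right 3 hexcess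
    _ = 1 / 9 := by norm_num

theorem stmt_6 :
    pSucc (Real.pi / 3) = 1 / 9 ∧ pSucc Real.pi = 1 / 9 ∧
      ∀ φ : ℝ, Real.pi / 3 < φ → φ < Real.pi → pSucc φ < 1 / 9 :=
  ⟨pSucc_pi_div_three, pSucc_pi, fun _ => pSucc_lt_one_div_nine⟩
end

section
/- Let φ ∈ [0, π] and let w = e^{i(φ+π)/4}·√(2·sin(φ/2)) ∈ ℂ (so that w² = e^{iφ} − 1). Consider the 2×2 complex matrix A = [[1, −w], [−w, 1]]. Then the eigenvalues of A†A (i.e., the squared singular values of A) are σ±² = 1 + 2·sin(φ/2) ± 2·(2 − 2·cos φ)^{1/4}·cos((φ+π)/4). -/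
/-!
A matrix `A = !![a, b; b, a]` has eigenvalues `a + b` and `a - b`, and `A†A` is again of this shape,
with eigenvalues `|a + b|²` and `|a - b|²`. For `a = 1` and `b = -w` these are `|1 ∓ w|²`, which the
law of cosines evaluates from the polar form of `w`.
-/

open Complex Matrix Polynomial

theorem charpoly_fin_two_circulant {R : Type*} [CommRing R] (a b : R) :
    (!![a, b; b, a]).charpoly = (X - C (a + b)) * (X - C (a - b)) := by
  nontriviality R
  rw [charpoly_fin_two, trace_fin_two_of, det_fin_two_of]
  simp only [C_add, C_sub, C_mul]
  ring

theorem conjTranspose_mul_self_fin_two_circulant {R : Type*}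
    [NonUnitalNonAssocSemiring R] [Star R] (a b : R) :
    (!![a, b; b, a])ᴴ * !![a, b; b, a] =
      !![star a * a + star b * b, star a * b + star b * a;
         star a * b + star b * a, star a * a + star b * b] := by
  have hconj : (!![a, b; b, a])ᴴ = !![star a, star b; star b, star a] := by
    ext i j
    fin_cases i <;> fin_cases j <;> rfl
  rw [hconj, mul_fin_two, add_comm (star b * a), add_comm (star b * b)]

theorem charpoly_conjTranspose_mul_self_fin_two_circulant {R : Type*} [CommRing R] [StarRing R]
    (a b : R) :
    ((!![a, b; b, a])ᴴ * !![a, b; b, a]).charpoly =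
      (X - C (star (a + b) * (a + b))) * (X - C (star (a - b) * (a - b))) := by
  have hadd : star a * a + star b * b + (star a * b + star b * a) = star (a + b) * (a + b) := by
    rw [star_add]; ring
  have hsub : star a * a + star b * b - (star a * b + star b * a) = star (a - b) * (a - b) := by
    rw [star_sub]; ring
  rw [conjTranspose_mul_self_fin_two_circulant, charpoly_fin_two_circulant, hadd, hsub]

theorem normSq_one_add_exp_mul_I_mul (θ r : ℝ) :
    normSq (1 + exp (θ * I) * r) = 1 + r ^ 2 + 2 * r * Real.cos θ := by
  have hnorm : normSq (exp (θ * I) * r) = r ^ 2 := by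
    rw [normSq_mul, normSq_ofReal, normSq_eq_norm_sq, norm_exp_ofReal_mul_I]
    ring
  rw [normSq_add, hnorm, normSq_one, one_mul, conj_re, re_mul_ofReal, exp_ofReal_mul_I_re]
  ring

theorem two_sub_two_mul_cos_eq_sq (φ : ℝ) :
    2 - 2 * Real.cos φ = (2 * Real.sin (φ / 2)) ^ 2 := by
  rw [mul_pow, Real.sin_sq_eq_half_sub, mul_div_cancel₀ φ two_ne_zero]
  ring

theorem two_sub_two_mul_cos_rpow_quarter (φ : ℝ) :
    (2 - 2 * Real.cos φ) ^ ((1 : ℝ) / 4) = √|2 * Real.sin (φ / 2)| := by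
  rw [two_sub_two_mul_cos_eq_sq, ← sq_abs, ← Real.rpow_natCast_mul (abs_nonneg _),
    Real.sqrt_eq_rpow]
  norm_num

theorem stmt_9_general (φ : ℝ) (hφ : 0 ≤ Real.sin (φ / 2))
    (w : ℂ) (hw : w = Complex.exp (((φ + Real.pi) / 4 : ℝ) * Complex.I) *
      (Real.sqrt (2 * Real.sin (φ / 2)) : ℝ))
    (A : Matrix (Fin 2) (Fin 2) ℂ) (hA : A = !![1, -w; -w, 1])
    (σsqP σsqM : ℝ)
    (hP : σsqP = 1 + 2 * Real.sin (φ / 2) +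
      2 * (2 - 2 * Real.cos φ) ^ ((1 : ℝ) / 4) * Real.cos ((φ + Real.pi) / 4))
    (hM : σsqM = 1 + 2 * Real.sin (φ / 2) -
      2 * (2 - 2 * Real.cos φ) ^ ((1 : ℝ) / 4) * Real.cos ((φ + Real.pi) / 4)) :
    (Aᴴ * A).charpoly = (X - C (σsqP : ℂ)) * (X - C (σsqM : ℂ)) := by
  have hnonneg : 0 ≤ 2 * Real.sin (φ / 2) := by positivity
  have hroot : (2 - 2 * Real.cos φ) ^ ((1 : ℝ) / 4) = √(2 * Real.sin (φ / 2)) := by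
    rw [two_sub_two_mul_cos_rpow_quarter, abs_of_nonneg hnonneg]
  have hplus : normSq (1 + w) = σsqP := by
    rw [hw, normSq_one_add_exp_mul_I_mul, Real.sq_sqrt hnonneg, hP, hroot]
  have hminus : normSq (1 - w) = σsqM := by
    rw [hw, sub_eq_add_neg, ← mul_neg, ← ofReal_neg, normSq_one_add_exp_mul_I_mul, neg_sq,
      Real.sq_sqrt hnonneg, hM, hroot]
    ring
  rw [hA, charpoly_conjTranspose_mul_self_fin_two_circulant, sub_neg_eq_add, ← sub_eq_add_neg,
    star_def, ← normSq_eq_conj_mul_self, ← normSq_eq_conj_mul_self, hplus, hminus, mul_comm]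

theorem stmt_9 (φ : ℝ) (hφ : φ ∈ Set.Icc 0 Real.pi)
    (w : ℂ) (hw : w = Complex.exp (((φ + Real.pi) / 4 : ℝ) * Complex.I) *
      (Real.sqrt (2 * Real.sin (φ / 2)) : ℝ))
    (A : Matrix (Fin 2) (Fin 2) ℂ) (hA : A = !![1, -w; -w, 1])
    (σsqP σsqM : ℝ)
    (hP : σsqP = 1 + 2 * Real.sin (φ / 2) +
      2 * (2 - 2 * Real.cos φ) ^ ((1 : ℝ) / 4) * Real.cos ((φ + Real.pi) / 4))
    (hM : σsqM = 1 + 2 * Real.sin (φ / 2) -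
      2 * (2 - 2 * Real.cos φ) ^ ((1 : ℝ) / 4) * Real.cos ((φ + Real.pi) / 4)) :
    (Aᴴ * A).charpoly = (X - C (σsqP : ℂ)) * (X - C (σsqM : ℂ)) :=
  stmt_9_general φ (Real.sin_nonneg_of_nonneg_of_le_pi (by linarith [hφ.1])
    (by linarith [hφ.1, hφ.2])) w hw A hA σsqP σsqM hP hM
end

section
/- Let θ ∈ ℝ with sin θ ≠ 0, and consider the real beam-splitter matrix B = [[sin θ, cos θ], [−cos θ, sin θ]], whose permanent is per(B) = sin²θ − cos²θ. Suppose φ ∈ ℝ is such that per(B) = e^{iφ}·sin²θ (the condition for the post-selected action of the single beam splitter to be a controlled phase gate of phase φ). Then e^{iφ} ∈ {1, −1}; moreover e^{iφ} = 1 holds if and only if sin²θ = 1, and e^{iφ} = −1 holds if and only if sin²θ = 1/3. Hence a single real beam splitter can only implement the controlled phases φ = 0 and φ = π, the latter exactly at reflectivity sin²θ = 1/3. -/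
open Complex Matrix

/-!
For a unitary `A`, Cramer's rule `adjugate A = det A • A⋆` gives `A₁₁ = det A * conj A₀₀`. Hence,
with the reflectivity `p = |A₀₀|²`, the product of the diagonal entries is `det A * p`, and the
permanent, being `2 A₀₀ A₁₁ - det A`, is `det A * (2 p - 1)`. The gate condition therefore reads
`2 p - 1 = e^{iφ} p`, and taking absolute values leaves only `p = 1` and `p = 1/3`.
-/

theorem permanent_fin_two {R : Type*} [CommSemiring R] (A : Matrix (Fin 2) (Fin 2) R) :
    A.permanent = A 0 0 * A 1 1 + A 0 1 * A 1 0 := by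
  simp [permanent, Finset.univ_perm_fin_succ, ← Finset.univ_product_univ,
    Fin.sum_univ_two, Fin.prod_univ_two, mul_comm (A 1 0)]

section UnitaryMatrix

variable {R : Type*} [CommRing R] [StarRing R]

theorem adjugate_of_mem_unitaryGroup {n : Type*} [DecidableEq n] [Fintype n] {A : Matrix n n R}
    (hA : A ∈ unitaryGroup n R) : A.adjugate = A.det • star A :=
  calc A.adjugate = A.adjugate * (A * star A) := by rw [mem_unitaryGroup_iff.mp hA, mul_one]
    _ = A.det • star A := by rw [← mul_assoc, adjugate_mul, smul_mul_assoc, one_mul]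

variable {A : Matrix (Fin 2) (Fin 2) R}

theorem mul_diag_fin_two_of_mem_unitaryGroup (hA : A ∈ unitaryGroup (Fin 2) R) :
    A 0 0 * A 1 1 = A.det * (A 0 0 * star (A 0 0)) := by
  have h : A 1 1 = A.det * star (A 0 0) := by
    simpa [adjugate_fin_two] using congr_fun₂ (adjugate_of_mem_unitaryGroup hA) 0 0
  rw [h, mul_left_comm]

theorem permanent_fin_two_of_mem_unitaryGroup (hA : A ∈ unitaryGroup (Fin 2) R) :
    A.permanent = A.det * (2 * (A 0 0 * star (A 0 0)) - 1) :=
  calc A.permanent = 2 * (A 0 0 * A 1 1) - A.det := by rw [permanent_fin_two, det_fin_two]; ring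
    _ = A.det * (2 * (A 0 0 * star (A 0 0)) - 1) := by
      rw [mul_diag_fin_two_of_mem_unitaryGroup hA]; ring

theorem fin_two_mem_unitaryGroup {a b : R} (h : a * star a + b * star b = 1) :
    !![a, b; -star b, star a] ∈ unitaryGroup (Fin 2) R := by
  have hstar : star !![a, b; -star b, star a] = !![star a, -b; star b, a] := by
    ext i j
    fin_cases i <;> fin_cases j <;> simp [star_apply]
  have hrow : -star b * -b + star a * a = 1 := by linear_combination h
  have horth : a * -b + b * a = 0 := by ring
  have horth' : -star b * star a + star a * star b = 0 := by ring
  rw [mem_unitaryGroup_iff, hstar, mul_fin_two, one_fin_two, h, hrow, horth, horth']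

end UnitaryMatrix

theorem eq_one_or_eq_neg_one_of_two_mul_sub_one_eq {z : ℂ} {p : ℝ} (hz : ‖z‖ = 1)
    (h : 2 * (p : ℂ) - 1 = z * p) : z = 1 ∧ p = 1 ∨ z = -1 ∧ p = 1 / 3 := by
  have habs : |2 * p - 1| = |p| := by
    have hnorm : ‖((2 * p - 1 : ℝ) : ℂ)‖ = ‖z * p‖ := by rw [← h]; push_cast; rfl
    rwa [norm_mul, hz, one_mul, norm_real, norm_real] at hnorm
  rcases abs_eq_abs.mp habs with hp | hp
  · obtain rfl : p = 1 := by linarith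
    exact .inl ⟨by push_cast at h; linear_combination -h, rfl⟩
  · obtain rfl : p = 1 / 3 := by linarith
    exact .inr ⟨by push_cast at h; linear_combination -3 * h, rfl⟩

theorem stmt_11_general {A : Matrix (Fin 2) (Fin 2) ℂ} (hA : A ∈ unitaryGroup (Fin 2) ℂ) {φ : ℝ}
    (hgate : A.permanent = exp (φ * I) * (A 0 0 * A 1 1)) :
    (exp (φ * I) = 1 ∨ exp (φ * I) = -1) ∧
      (exp (φ * I) = 1 ↔ ‖A 0 0‖ ^ 2 = 1) ∧
      (exp (φ * I) = -1 ↔ ‖A 0 0‖ ^ 2 = 1 / 3) := by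
  have hdet : A.det ≠ 0 := (UnitaryGroup.det_isUnit ⟨A, hA⟩).ne_zero
  have hreflectivity : A 0 0 * star (A 0 0) = (‖A 0 0‖ ^ 2 : ℝ) := by
    rw [ofReal_pow]; exact mul_conj' _
  have hphase : 2 * ((‖A 0 0‖ ^ 2 : ℝ) : ℂ) - 1 = exp (φ * I) * (‖A 0 0‖ ^ 2 : ℝ) := by
    rw [permanent_fin_two_of_mem_unitaryGroup hA, mul_diag_fin_two_of_mem_unitaryGroup hA,
      hreflectivity, mul_left_comm] at hgate
    exact mul_left_cancel₀ hdet hgate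
  rcases eq_one_or_eq_neg_one_of_two_mul_sub_one_eq (norm_exp_ofReal_mul_I φ) hphase with
    ⟨hz, hp⟩ | ⟨hz, hp⟩ <;> rw [hz, hp] <;> norm_num

theorem sin_cos_mem_unitaryGroup (θ : ℝ) :
    !![(Real.sin θ : ℂ), (Real.cos θ : ℂ); -(Real.cos θ : ℂ), (Real.sin θ : ℂ)] ∈
      unitaryGroup (Fin 2) ℂ := by
  have h : (Real.sin θ : ℂ) * star (Real.sin θ : ℂ) + Real.cos θ * star (Real.cos θ : ℂ) = 1 := by
    simp only [star_def, conj_ofReal, ← sq]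
    exact_mod_cast Real.sin_sq_add_cos_sq θ
  simpa only [star_def, conj_ofReal] using fin_two_mem_unitaryGroup h

theorem stmt_11 (θ φ : ℝ) (hθ : Real.sin θ ≠ 0)
    (B : Matrix (Fin 2) (Fin 2) ℂ)
    (hB : B = !![(Real.sin θ : ℂ), (Real.cos θ : ℂ);
                 -(Real.cos θ : ℂ), (Real.sin θ : ℂ)])
    (hgate : B 0 0 * B 1 1 + B 0 1 * B 1 0 =
      Complex.exp (φ * Complex.I) * (B 0 0 * B 1 1)) :
    (Complex.exp (φ * Complex.I) = 1 ∨ Complex.exp (φ * Complex.I) = -1) ∧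
      (Complex.exp (φ * Complex.I) = 1 ↔ Real.sin θ ^ 2 = 1) ∧
      (Complex.exp (φ * Complex.I) = -1 ↔ Real.sin θ ^ 2 = 1 / 3) := by
  subst hB
  simpa only [of_apply, cons_val_zero, norm_real, Real.norm_eq_abs, sq_abs] using
    stmt_11_general (sin_cos_mem_unitaryGroup θ) ((permanent_fin_two _).trans hgate)
end

section
/- Let m ≥ 4 and let M̃ ∈ ℂ^{m×m} be the symmetric matrix with M̃₁₃ = M̃₃₁ = 1/2 and all other entries zero (representing two single photons, one in mode 1 and one in mode 3). Let U ∈ ℂ^{m×m} be any unitary matrix, and let M' = Uᵀ·M̃·U. Then for every choice of four indices i₁ < i₂ < i₃ < i₄ in {1, …, m} and every nonzero c ∈ ℂ, the 4×4 principal submatrix of M' on the rows and columns i₁, i₂, i₃, i₄ is not equal to c·N, where N ∈ ℂ^{4×4} is the symmetric matrix with N₁₃ = N₃₁ = N₂₄ = N₄₂ = 1/2 and all other entries zero (representing a dual-rail EPR pair). In particular, since rank M̃ = 2 while rank N = 4, no linear optical network with auxiliary vacuum modes post-selected on the vacuum can transform two single photons into an EPR pair. -/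
open Matrix

/-!
Neither a linear network nor the projection of auxiliary modes onto the vacuum can increase the rank
of the matrix of a two-photon state. Two single photons give a matrix with at most two nonzero rows,
whereas the matrix of a dual-rail EPR pair is invertible of size four.
-/

section RankMonotonicity

variable {l m n o p q R : Type*} [Fintype m] [Fintype n] [Fintype q]
  [CommSemiring R] [StrongRankCondition R]

lemma rank_submatrix_mul_mul_le (V : Matrix l m R) (A : Matrix m n R) (U : Matrix n o R)
    (e : p → l) (f : q → o) : ((V * A * U).submatrix e f).rank ≤ A.rank := by
  rw [submatrix_mul _ _ e id f Function.bijective_id,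
    submatrix_mul _ _ e id id Function.bijective_id, submatrix_id_id]
  exact (rank_mul_le_left _ _).trans (rank_mul_le_right _ _)

lemma submatrix_mul_mul_ne_of_rank_lt {A : Matrix m n R} {B : Matrix p q R}
    (h : A.rank < B.rank) (V : Matrix l m R) (U : Matrix n o R) (e : p → l) (f : q → o) :
    (V * A * U).submatrix e f ≠ B := by
  rintro rfl
  exact h.not_ge (rank_submatrix_mul_mul_le V A U e f)

end RankMonotonicity

section TwoPhotonStates

variable {n K : Type*} [DecidableEq n] [Field K]

variable (K) in
/-- The symmetric matrix of the two-photon state `a†ᵢ a†ⱼ |vac⟩`: one photon in each of the modes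
`i` and `j`. For `i = j` the two terms add up to the matrix of `(a†ᵢ)² |vac⟩`. -/
def photonPair (i j : n) : Matrix n n K :=
  single i j (1 / 2) + single j i (1 / 2)

variable (K) in
/-- The symmetric matrix of the dual-rail EPR pair `(a†₀ a†₂ + a†₁ a†₃) |vac⟩`, up to
normalization: the modes `0, 1` carry one qubit and the modes `2, 3` the other. -/
def eprPair : Matrix (Fin 4) (Fin 4) K :=
  photonPair K 0 2 + photonPair K 1 3

lemma photonPair_eq_ite {i j : n} (hij : i ≠ j) :
    photonPair K i j =
      of fun k l => if (k = i ∧ l = j) ∨ (k = j ∧ l = i) then 1 / 2 else 0 := by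
  ext k l
  simp only [photonPair, Matrix.add_apply, single_apply, of_apply]
  grind

lemma eprPair_eq_fin_four :
    eprPair K = !![0, 0, 1/2, 0; 0, 0, 0, 1/2; 1/2, 0, 0, 0; 0, 1/2, 0, 0] := by
  ext i j
  fin_cases i <;> fin_cases j <;> simp [eprPair, photonPair]

lemma rank_photonPair_le_two [Fintype n] (i j : n) : (photonPair K i j).rank ≤ 2 := by
  have hsupp : Function.support (photonPair K i j).row ⊆ ({i, j} : Finset n) := by
    refine Function.support_subset_iff'.2 fun k hk => ?_
    ext l
    simp only [Finset.coe_pair, Set.mem_insert_iff, Set.mem_singleton_iff, not_or] at hk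
    simp [photonPair, Ne.symm hk.1, Ne.symm hk.2]
  exact (rank_le_card_of_support_subset _ _ hsupp).trans Finset.card_le_two

lemma det_eprPair : (eprPair K).det = (1 / 2) ^ 4 := by
  rw [eprPair_eq_fin_four]
  simp [det_succ_row_zero, Fin.sum_univ_succ, Fin.succAbove, pow_succ, mul_assoc]

lemma rank_smul_eprPair [NeZero (2 : K)] {c : K} (hc : c ≠ 0) : (c • eprPair K).rank = 4 := by
  have hdet : (c • eprPair K).det ≠ 0 := by
    simp [det_eprPair, hc, two_ne_zero]
  simpa using rank_of_det_ne_zero hdet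

theorem stmt_13_general {l o : Type*} [Fintype n] [NeZero (2 : K)] (i j : n)
    (V : Matrix l n K) (U : Matrix n o K) (e : Fin 4 → l) (f : Fin 4 → o) {c : K} (hc : c ≠ 0) :
    (V * photonPair K i j * U).submatrix e f ≠ c • eprPair K := by
  refine submatrix_mul_mul_ne_of_rank_lt ?_ V U e f
  calc (photonPair K i j).rank ≤ 2 := rank_photonPair_le_two i j
    _ < 4 := by norm_num
    _ = (c • eprPair K).rank := (rank_smul_eprPair hc).symm

end TwoPhotonStates

theorem stmt_13 (m : ℕ) (hm : 4 ≤ m)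
    (Mt : Matrix (Fin m) (Fin m) ℂ)
    (hMt : Mt = Matrix.of fun i j : Fin m =>
      if (i = (⟨0, by omega⟩ : Fin m) ∧ j = (⟨2, by omega⟩ : Fin m)) ∨
         (i = (⟨2, by omega⟩ : Fin m) ∧ j = (⟨0, by omega⟩ : Fin m)) then (1 / 2 : ℂ) else 0)
    (U : Matrix (Fin m) (Fin m) ℂ) (hU : U ∈ Matrix.unitaryGroup (Fin m) ℂ)
    (M' : Matrix (Fin m) (Fin m) ℂ) (hM' : M' = Uᵀ * Mt * U)
    (N : Matrix (Fin 4) (Fin 4) ℂ)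
    (hN : N = !![0, 0, 1/2, 0; 0, 0, 0, 1/2; 1/2, 0, 0, 0; 0, 1/2, 0, 0]) :
    ∀ idx : Fin 4 → Fin m, StrictMono idx →
      ∀ c : ℂ, c ≠ 0 → M'.submatrix idx idx ≠ c • N := by
  rw [hM', hMt, hN, ← photonPair_eq_ite (by simp), ← eprPair_eq_fin_four]
  exact fun idx _ c hc => stmt_13_general _ _ Uᵀ U idx idx hc
end

section
/- For nonzero real x, y, let A(x,y) = [[1, −2/(x·y), 0], [0, 1, y], [x, 0, 1]] ∈ ℝ^{3×3} (this is the generalised Toffoli core for phase φ = π, since e^{iπ}−1 = −2). Then the supremum over all nonzero real x, y of σ_max(A(x,y))^{−6}, where σ_max denotes the largest singular value (the ℓ²→ℓ² operator norm), equals 1 + 3·(2^{1/3} − 2^{2/3}) ≈ 1/57. That is, the optimal success probability of the post-selected Toffoli (controlled-controlled-Z) gate within this class is p_s(π) = 1 + 3·(2^{1/3} − 2^{2/3}). -/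
open Matrix

/-- The largest singular value of a square real matrix, i.e. its `ℓ² → ℓ²` operator norm. -/
noncomputable def sigmaMax3 (A : Matrix (Fin 3) (Fin 3) ℝ) : ℝ :=
  ‖Matrix.toEuclideanCLM (𝕜 := ℝ) (n := Fin 3) A‖

/-- The generalised Toffoli core matrix for phase `π`. -/
noncomputable def toffoliCore (x y : ℝ) : Matrix (Fin 3) (Fin 3) ℝ :=
  !![1, -2 / (x * y), 0;
     0, 1, y;
     x, 0, 1]

/-!
The core is the identity plus a weighted 3-cycle whose weights `a, b, c` are constrained only by
`a * b * c = -2`. Testing the norm on the six vectors `eᵢ ± eⱼ` and averaging gives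
`3 + (|a| + |b| + |c|) + (a² + b² + c²) ≤ 3 σ²`, which AM-GM turns into `1 + t + t² ≤ σ²` with
`t³ = 2`. The circulant core `a = b = c = -t` attains this bound: at `v = (p, q, r)` the defect
`(1 + t + t²) ‖v‖² - ‖A v‖²` is the nonnegative term `t (p + q + r)²`.
Finally `(t - 1) (1 + t + t²) = t³ - 1 = 1`, so `σ⁻⁶ = (t - 1)³` there.
-/

/-- The identity plus a weighted cyclic shift of the three modes, with weights `a`, `b`, `c`. The
cores `toffoliCore x y` with `x, y ≠ 0` are those with `a * b * c = -2`. -/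
def cyclicCore (a b c : ℝ) : Matrix (Fin 3) (Fin 3) ℝ :=
  !![1, a, 0;
     0, 1, b;
     c, 0, 1]

theorem toffoliCore_eq_cyclicCore (x y : ℝ) :
    toffoliCore x y = cyclicCore (-2 / (x * y)) y x :=
  rfl

theorem norm_toEuclideanCLM_sq_le_iff {n : Type*} [Fintype n] [DecidableEq n] (A : Matrix n n ℝ)
    {M : ℝ} (hM : 0 ≤ M) :
    ‖toEuclideanCLM (𝕜 := ℝ) A‖ ^ 2 ≤ M ↔ ∀ v : n → ℝ, A *ᵥ v ⬝ᵥ A *ᵥ v ≤ M * (v ⬝ᵥ v) := by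
  have norm_sq (w : EuclideanSpace ℝ n) : ‖w‖ ^ 2 = w.ofLp ⬝ᵥ w.ofLp := by
    rw [EuclideanSpace.real_norm_sq_eq]
    simp only [dotProduct, sq]
  rw [← Real.le_sqrt (norm_nonneg _) hM, ContinuousLinearMap.opNorm_le_iff (Real.sqrt_nonneg M),
    (WithLp.toLp_surjective 2).forall]
  refine forall_congr' fun v => ?_
  rw [← pow_le_pow_iff_left₀ (norm_nonneg _) (by positivity) two_ne_zero, mul_pow,
    Real.sq_sqrt hM, norm_sq, norm_sq, ofLp_toEuclideanCLM]

theorem sigmaMax3_cyclicCore_sq_le_iff (a b c : ℝ) {M : ℝ} (hM : 0 ≤ M) :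
    sigmaMax3 (cyclicCore a b c) ^ 2 ≤ M ↔ ∀ p q r : ℝ,
      (p + a * q) ^ 2 + (q + b * r) ^ 2 + (c * p + r) ^ 2 ≤ M * (p ^ 2 + q ^ 2 + r ^ 2) := by
  simp [sigmaMax3, norm_toEuclideanCLM_sq_le_iff _ hM, Fin.forall_fin_succ_pi, cyclicCore,
    dotProduct, Fin.sum_univ_three, ← sq]

theorem three_add_sum_abs_add_sum_sq_le_sigmaMax3_cyclicCore_sq (a b c : ℝ) :
    3 + (|a| + |b| + |c|) + (a ^ 2 + b ^ 2 + c ^ 2) ≤ 3 * sigmaMax3 (cyclicCore a b c) ^ 2 := by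
  have hM := (sigmaMax3_cyclicCore_sq_le_iff a b c (sq_nonneg _)).1 le_rfl
  generalize sigmaMax3 (cyclicCore a b c) ^ 2 = M at hM ⊢
  have ha : |a| ≤ M - 1 - (a ^ 2 + c ^ 2) / 2 :=
    abs_le'.2 ⟨by linarith [hM 1 1 0], by linarith [hM 1 (-1) 0]⟩
  have hb : |b| ≤ M - 1 - (a ^ 2 + b ^ 2) / 2 :=
    abs_le'.2 ⟨by linarith [hM 0 1 1], by linarith [hM 0 1 (-1)]⟩
  have hc : |c| ≤ M - 1 - (b ^ 2 + c ^ 2) / 2 :=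
    abs_le'.2 ⟨by linarith [hM 1 0 1], by linarith [hM 1 0 (-1)]⟩
  linarith

theorem three_mul_le_add_of_mul_eq_pow_three {a b c t : ℝ} (ha : 0 ≤ a) (hb : 0 ≤ b) (hc : 0 ≤ c)
    (h : a * b * c = t ^ 3) : 3 * t ≤ a + b + c := by
  have ht : 0 ≤ t := (by decide : Odd 3).pow_nonneg_iff.1 (h ▸ by positivity)
  have root_eq : a ^ (1 / 3 : ℝ) * b ^ (1 / 3 : ℝ) * c ^ (1 / 3 : ℝ) = t := by
    rw [← Real.mul_rpow ha hb, ← Real.mul_rpow (mul_nonneg ha hb) hc, h, one_div]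
    exact Real.pow_rpow_inv_natCast ht three_ne_zero
  have amgm := Real.geom_mean_le_arith_mean3_weighted (w₁ := 1 / 3) (w₂ := 1 / 3) (w₃ := 1 / 3)
    (by norm_num) (by norm_num) (by norm_num) ha hb hc (by norm_num)
  linarith

theorem one_add_add_sq_le_sigmaMax3_cyclicCore_sq {a b c t : ℝ}
    (h : |a * b * c| = t ^ 3) : 1 + t + t ^ 2 ≤ sigmaMax3 (cyclicCore a b c) ^ 2 := by
  have h_abs : 3 * t ≤ |a| + |b| + |c| :=
    three_mul_le_add_of_mul_eq_pow_three (abs_nonneg a) (abs_nonneg b) (abs_nonneg c)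
      (by rw [← h, abs_mul, abs_mul])
  have h_sq : 3 * t ^ 2 ≤ a ^ 2 + b ^ 2 + c ^ 2 :=
    three_mul_le_add_of_mul_eq_pow_three (sq_nonneg a) (sq_nonneg b) (sq_nonneg c)
      (by rw [← mul_pow, ← mul_pow, ← sq_abs, h, pow_right_comm])
  linarith [three_add_sum_abs_add_sum_sq_le_sigmaMax3_cyclicCore_sq a b c]

theorem sigmaMax3_cyclicCore_neg_sq {t : ℝ} (ht : 0 ≤ t) :
    sigmaMax3 (cyclicCore (-t) (-t) (-t)) ^ 2 = 1 + t + t ^ 2 := by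
  refine le_antisymm ((sigmaMax3_cyclicCore_sq_le_iff _ _ _ (by positivity)).2 fun p q r => ?_)
    (one_add_add_sq_le_sigmaMax3_cyclicCore_sq ?_)
  · linarith [mul_nonneg ht (sq_nonneg (p + q + r))]
  · rw [abs_mul, abs_mul, abs_neg, abs_of_nonneg ht]
    ring

theorem isGreatest_sigmaMax3_cyclicCore_zpow {t : ℝ} (ht : 0 < t) :
    IsGreatest {r : ℝ | ∃ x y : ℝ, x ≠ 0 ∧ y ≠ 0 ∧
        r = sigmaMax3 (cyclicCore (-t ^ 3 / (x * y)) y x) ^ (-6 : ℤ)}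
      ((1 + t + t ^ 2) ^ 3)⁻¹ := by
  have zpow_eq (s : ℝ) : s ^ (-6 : ℤ) = ((s ^ 2) ^ 3)⁻¹ := by
    rw [← pow_mul, _root_.zpow_neg]
    rfl
  refine ⟨⟨-t, -t, neg_ne_zero.2 ht.ne', neg_ne_zero.2 ht.ne', ?_⟩, ?_⟩
  · have weight_eq : -t ^ 3 / (-t * -t) = -t := by field_simp
    rw [weight_eq, zpow_eq, sigmaMax3_cyclicCore_neg_sq ht.le]
  · rintro _ ⟨x, y, hx, hy, rfl⟩
    have abs_prod_eq : |-t ^ 3 / (x * y) * y * x| = t ^ 3 := by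
      rw [show -t ^ 3 / (x * y) * y * x = -t ^ 3 by field_simp, abs_neg, abs_of_pos (by positivity)]
    rw [zpow_eq]
    gcongr
    exact one_add_add_sq_le_sigmaMax3_cyclicCore_sq abs_prod_eq

theorem inv_one_add_add_sq_pow_three {t : ℝ} (ht : t ^ 3 = 2) :
    ((1 + t + t ^ 2) ^ 3)⁻¹ = 1 + 3 * (t - t ^ 2) := by
  have inv_eq : (1 + t + t ^ 2)⁻¹ = t - 1 :=
    inv_eq_of_mul_eq_one_left (by linear_combination ht)
  calc ((1 + t + t ^ 2) ^ 3)⁻¹ = (t - 1) ^ 3 := by rw [← inv_pow, inv_eq]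
    _ = 1 + 3 * (t - t ^ 2) := by linear_combination ht

theorem stmt_15 :
    sSup {r : ℝ | ∃ x y : ℝ, x ≠ 0 ∧ y ≠ 0 ∧
        r = (sigmaMax3 (toffoliCore x y)) ^ (-6 : ℤ)} =
      1 + 3 * ((2 : ℝ) ^ ((1 : ℝ) / 3) - (2 : ℝ) ^ ((2 : ℝ) / 3)) := by
  have ht : 0 < (2 : ℝ) ^ ((1 : ℝ) / 3) := by positivity
  have ht3 : ((2 : ℝ) ^ ((1 : ℝ) / 3)) ^ 3 = 2 := by
    rw [← Real.rpow_mul_natCast two_pos.le]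
    norm_num
  have ht2 : (2 : ℝ) ^ ((2 : ℝ) / 3) = ((2 : ℝ) ^ ((1 : ℝ) / 3)) ^ 2 := by
    rw [← Real.rpow_mul_natCast two_pos.le]
    norm_num
  have greatest := isGreatest_sigmaMax3_cyclicCore_zpow ht
  rw [ht3, inv_one_add_add_sq_pow_three ht3, ← ht2] at greatest
  simp only [toffoliCore_eq_cyclicCore]
  exact greatest.csSup_eq
end
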